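/- Let p be a prime and r ≥ p+1 an integer. The 𝔽_p-linear map ψ : V_r → ind_{B(𝔽_p)}^{GL₂(𝔽_p)} d^r sending a homogeneous polynomial P to the function ψ_P defined by ψ_P([[a,b],[c,d]]) = P(c,d) is GL₂(𝔽_p)-equivariant and surjective, and its kernel is exactly V_r*; consequently ψ induces an isomorphism of GL₂(𝔽_p)-representations V_r/V_r* ≅ ind_{B(𝔽_p)}^{GL₂(𝔽_p)} d^r. -/

import Mathlib

/-!
Common setup: the symmetric power representations `V_r` of `GL₂(𝔽_p)` realized as
homogeneous polynomials of degree `r` in `𝔽_p[X,Y]`, the action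
`([[a,b],[c,d]]·P)(X,Y) = P(aX+cY, bX+dY)`, and the subrepresentation `V_r*` of
polynomials divisible by `X^p Y − X Y^p`.
-/

set_option synthInstance.maxHeartbeats 1000000
set_option maxHeartbeats 1000000

open MvPolynomial

variable (p : ℕ) [Fact p.Prime]

/-- The action of a 2×2 matrix M on polynomials: for M = [[a,b],[c,d]],
`(M·P)(X,Y) = P(aX+cY, bX+dY)`; here the variable `X i` is sent to `Σ_j M j i • X j`. -/
noncomputable def polyAct (M : Matrix (Fin 2) (Fin 2) (ZMod p)) :
    MvPolynomial (Fin 2) (ZMod p) →ₗ[ZMod p] MvPolynomial (Fin 2) (ZMod p) :=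
  (aeval fun i => ∑ j, C (M j i) * X j).toLinearMap

/-- `V_r`: homogeneous polynomials of degree r in 𝔽_p[X,Y]. -/
noncomputable def Vpoly (r : ℕ) : Submodule (ZMod p) (MvPolynomial (Fin 2) (ZMod p)) :=
  homogeneousSubmodule (Fin 2) (ZMod p) r

/-- `V_r*`: elements of `V_r` divisible by `X^p Y − X Y^p`. -/
noncomputable def VpolyStar (r : ℕ) : Submodule (ZMod p) (MvPolynomial (Fin 2) (ZMod p)) :=
  Vpoly p r ⊓ Submodule.restrictScalars (ZMod p)
    (Ideal.span {(X 0 : MvPolynomial (Fin 2) (ZMod p)) ^ p * X 1 - X 0 * X 1 ^ p})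

/-- The Borel subgroup B(𝔽_p) of upper triangular matrices, as a subset of GL₂(𝔽_p). -/
def Bset : Set (GL (Fin 2) (ZMod p)) :=
  {b | (b : Matrix (Fin 2) (Fin 2) (ZMod p)) 1 0 = 0}

/-- The induced representation ind_{B(𝔽_p)}^{GL₂(𝔽_p)} d^r: functions f with
`f(bg) = d^r(b) f(g)` for all upper triangular b, where `d^r([[a,b],[0,d]]) = d^r`. -/
def IndB (r : ℕ) : Set (GL (Fin 2) (ZMod p) → ZMod p) :=
  {f | ∀ b ∈ Bset p, ∀ g : GL (Fin 2) (ZMod p),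
    f (b * g) = ((b : Matrix (Fin 2) (Fin 2) (ZMod p)) 1 1) ^ r * f g}

/-- The map ψ : P ↦ (g ↦ P(c,d)), evaluating P at the bottom row of g. -/
noncomputable def psi (P : MvPolynomial (Fin 2) (ZMod p)) :
    GL (Fin 2) (ZMod p) → ZMod p :=
  fun g => eval (fun j => (g : Matrix (Fin 2) (Fin 2) (ZMod p)) 1 j) P

/-!
A function in the induced representation depends only on the bottom row of its argument, and
homogeneously so; it is therefore determined by its values at the points `(t, 1)` and `(1, 0)` of
`ℙ¹(𝔽_q)`. A form of degree `r` is the homogenization of a polynomial `f` of degree at most `r`: its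
value at `(t, 1)` is `f(t)` and its value at `(1, 0)` is the coefficient of `T^r` in `f`.

If all these values vanish, then `T^q - T` divides `f` and `deg f < r`, so homogenizing
`f = (T^q - T) g` shows that `X^q Y - X Y^q` divides the form. Conversely, for `r ≥ q` arbitrary
values are attained: Lagrange interpolation on `𝔽_q` has degree less than `q`, and adding a multiple
of `T^(r - q) (T^q - T)` prescribes the coefficient of `T^r` without changing any `f(t)`.
-/

section Homogenize

variable {R : Type*} [CommSemiring R]

theorem eval_homogenize_one_zero (f : Polynomial R) (n : ℕ) :
    eval ![1, 0] (f.homogenize n) = f.coeff n := by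
  rw [Polynomial.homogenize, map_sum, Finset.sum_eq_single_of_mem (n, 0) (by simp)]
  · simp [eval_monomial]
  · rintro ⟨k, l⟩ hkl hne
    have hl : l ≠ 0 := by
      rintro rfl
      simp_all
    simp [eval_monomial, Finsupp.update_eq_add_single, hl]

theorem eval_homogenize_cons_one {f : Polynomial R} {n : ℕ} (hf : f.natDegree ≤ n) (t : R) :
    eval ![t, 1] (f.homogenize n) = f.eval t :=
  Polynomial.aeval_homogenize_of_eq_one hf ![t, 1] rfl

theorem exists_homogenize_eq_of_isHomogeneous {P : MvPolynomial (Fin 2) R} {n : ℕ}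
    (hP : P.IsHomogeneous n) : ∃ f : Polynomial R, f.natDegree ≤ n ∧ f.homogenize n = P := by
  refine ⟨aeval ![Polynomial.X, 1] P, ?_, Polynomial.homogenize_eq_of_isHomogeneous hP rfl⟩
  have hdeg : ∀ i, (![Polynomial.X, 1] i : Polynomial R).natDegree ≤ 1 :=
    Fin.forall_fin_two.2 ⟨Polynomial.natDegree_X_le, by simp⟩
  simpa using aeval_natDegree_le P hP.totalDegree_le _ hdeg

theorem eval_smul_of_isHomogeneous {σ : Type*} {P : MvPolynomial σ R} {n : ℕ}
    (hP : P.IsHomogeneous n) (c : R) (v : σ → R) : eval (c • v) P = c ^ n * eval v P := by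
  rw [eval_eq, eval_eq, Finset.mul_sum]
  refine Finset.sum_congr rfl fun d hd ↦ ?_
  simp only [Pi.smul_apply, smul_eq_mul, mul_pow, Finset.prod_mul_distrib,
    Finset.prod_pow_eq_pow_sum, ← hP.degree_eq_sum_deg_support hd, mul_left_comm]

end Homogenize

section FiniteField

variable (K : Type*) [Field K] [Fintype K]

/-- The form `X^q Y - X Y^q` over a field `K` with `q` elements, which up to a scalar is the product
of the linear forms cutting out the points of `ℙ¹(K)`. It generates the ideal of the forms vanishing
at all these points. -/
noncomputable def dicksonForm : MvPolynomial (Fin 2) K :=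
  X 0 ^ Fintype.card K * X 1 - X 0 * X 1 ^ Fintype.card K

variable {K}

theorem X_pow_card_sub_X_dvd_of_eval_eq_zero {f : Polynomial K} (hf : ∀ t, f.eval t = 0) :
    Polynomial.X ^ Fintype.card K - Polynomial.X ∣ f := by
  obtain rfl | hf0 := eq_or_ne f 0
  · exact dvd_zero _
  have hroots := FiniteField.roots_X_pow_card_sub_X K
  have hsplits : (Polynomial.X ^ Fintype.card K - Polynomial.X : Polynomial K).Splits := by
    rw [Polynomial.splits_iff_card_roots, hroots,
      FiniteField.X_pow_card_sub_X_natDegree_eq K Fintype.one_lt_card, Finset.card_val,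
      Finset.card_univ]
  refine hsplits.dvd_of_roots_le_roots
    (FiniteField.X_pow_card_sub_X_ne_zero K Fintype.one_lt_card) ?_
  rw [hroots, Multiset.le_iff_subset Finset.univ.nodup]
  exact fun t _ ↦ (Polynomial.mem_roots hf0).2 (hf t)

theorem homogenize_X_pow_card_sub_X :
    (Polynomial.X ^ Fintype.card K - Polynomial.X : Polynomial K).homogenize (Fintype.card K + 1) =
      dicksonForm K := by
  simp [dicksonForm]

theorem eval_dicksonForm (v : Fin 2 → K) : eval v (dicksonForm K) = 0 := by
  simp [dicksonForm, FiniteField.pow_card]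

theorem dicksonForm_dvd_of_eval_eq_zero {P : MvPolynomial (Fin 2) K} {r : ℕ}
    (hP : P.IsHomogeneous r) (hinf : eval ![1, 0] P = 0) (haff : ∀ t, eval ![t, 1] P = 0) :
    dicksonForm K ∣ P := by
  obtain ⟨f, hfr, rfl⟩ := exists_homogenize_eq_of_isHomogeneous hP
  obtain rfl | hf := eq_or_ne f 0
  · simp
  have hf_eval (t : K) : f.eval t = 0 := (eval_homogenize_cons_one hfr t).symm.trans (haff t)
  obtain ⟨g, rfl⟩ := X_pow_card_sub_X_dvd_of_eval_eq_zero hf_eval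
  set q := Fintype.card K
  have hq : (Polynomial.X ^ q - Polynomial.X : Polynomial K).natDegree = q :=
    FiniteField.X_pow_card_sub_X_natDegree_eq K Fintype.one_lt_card
  have hlt : q + g.natDegree < r := by
    nth_rw 1 [← hq]
    rw [← Polynomial.natDegree_mul (left_ne_zero_of_mul hf) (right_ne_zero_of_mul hf)]
    refine hfr.lt_of_ne fun h ↦ hf ?_
    rw [eval_homogenize_one_zero, ← h] at hinf
    exact Polynomial.leadingCoeff_eq_zero.1 hinf
  obtain ⟨m, rfl⟩ := Nat.exists_eq_add_of_le (show q + 1 ≤ r by omega)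
  rw [Polynomial.homogenize_mul _ _ (by omega) (by omega), homogenize_X_pow_card_sub_X]
  exact dvd_mul_right _ _

theorem exists_natDegree_le_eval_eq_coeff_eq {r : ℕ} (hr : Fintype.card K ≤ r) (φ : K → K)
    (a : K) : ∃ f : Polynomial K, f.natDegree ≤ r ∧ (∀ t, f.eval t = φ t) ∧ f.coeff r = a := by
  classical
  obtain ⟨d, rfl⟩ := Nat.exists_eq_add_of_le' hr
  set q := Fintype.card K
  have hq : 1 < q := Fintype.one_lt_card
  have hinj : Set.InjOn id ((Finset.univ : Finset K) : Set K) := Function.injective_id.injOn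
  let L : Polynomial K := Lagrange.interpolate Finset.univ id φ
  let T : Polynomial K := Polynomial.X ^ d * (Polynomial.X ^ q - Polynomial.X)
  have hL_eval (t : K) : L.eval t = φ t :=
    Lagrange.eval_interpolate_at_node φ hinj (Finset.mem_univ t)
  have hL_deg : L.degree < (d + q : ℕ) :=
    (Lagrange.degree_interpolate_lt φ hinj).trans_le (by exact_mod_cast hr)
  have hT_eval (t : K) : T.eval t = 0 := by simp [T, q, FiniteField.pow_card]
  have hT_deg : T.natDegree ≤ d + q :=
    Polynomial.natDegree_mul_le_of_le (Polynomial.natDegree_X_pow_le d)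
      (FiniteField.X_pow_card_sub_X_natDegree_eq K hq).le
  have hT_coeff : T.coeff (d + q) = 1 := by
    simp [T, Polynomial.coeff_X_pow_mul', Polynomial.coeff_X, hq.ne]
  refine ⟨L + Polynomial.C a * T, ?_, fun t ↦ by simp [hL_eval, hT_eval], ?_⟩
  · exact Polynomial.natDegree_add_le_of_degree_le (Polynomial.natDegree_le_of_degree_le hL_deg.le)
      ((Polynomial.natDegree_C_mul_le a T).trans hT_deg)
  · simp [Polynomial.coeff_eq_zero_of_degree_lt hL_deg, hT_coeff]

theorem exists_isHomogeneous_eval_eq {r : ℕ} (hr : Fintype.card K ≤ r) (φ : K → K) (a : K) :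
    ∃ P : MvPolynomial (Fin 2) K, P.IsHomogeneous r ∧
      (∀ t, eval ![t, 1] P = φ t) ∧ eval ![1, 0] P = a := by
  obtain ⟨f, hdeg, heval, hcoeff⟩ := exists_natDegree_le_eval_eq_coeff_eq hr φ a
  exact ⟨f.homogenize r, f.isHomogeneous_homogenize,
    fun t ↦ (eval_homogenize_cons_one hdeg t).trans (heval t),
    (eval_homogenize_one_zero f r).trans hcoeff⟩

end FiniteField

section MatrixAction

variable {n R : Type*} [Fintype n] [CommSemiring R]

/-- The action of a matrix `M` on polynomials by linear substitution of the variables, replacing the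
row vector `X` of variables by `X * M`; for `M = [[a, b], [c, d]]` it sends `P(X, Y)` to
`P(aX + cY, bX + dY)`. -/
noncomputable def linearSubst (M : Matrix n n R) : MvPolynomial n R →ₐ[R] MvPolynomial n R :=
  aeval fun i ↦ ∑ j, C (M j i) * X j

theorem eval_linearSubst (v : n → R) (M : Matrix n n R) (P : MvPolynomial n R) :
    eval v (linearSubst M P) = eval (Matrix.vecMul v M) P := by
  suffices (aeval v).comp (linearSubst M) = aeval (Matrix.vecMul v M) from DFunLike.congr_fun this P
  ext i
  simp [linearSubst, Matrix.vecMul, dotProduct, mul_comm]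

end MatrixAction

section BottomRow

variable (R : Type*) [CommRing R]

/-- The map `ψ` sending a bivariate polynomial `P` to the function `g ↦ P(c, d)` on `GL₂(R)`, where
`(c, d)` is the bottom row of `g`. It is defined on all polynomials, not only on forms. -/
noncomputable def evalBottomRow : MvPolynomial (Fin 2) R →ₗ[R] (GL (Fin 2) R → R) :=
  LinearMap.pi fun g ↦ (aeval (g.val 1)).toLinearMap

/-- The representation of `GL₂(R)` induced from the character `d^r` of the subgroup of upper
triangular matrices, as a space of functions. -/
def borelInduced (r : ℕ) : Submodule R (GL (Fin 2) R → R) where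
  carrier := {f | ∀ b : GL (Fin 2) R, b.val 1 0 = 0 → ∀ g, f (b * g) = b.val 1 1 ^ r * f g}
  add_mem' hf hf' b hb g := by simp [hf b hb, hf' b hb, mul_add]
  zero_mem' := by simp
  smul_mem' c f hf b hb g := by simp [hf b hb, mul_left_comm]

variable {R}

theorem evalBottomRow_apply (P : MvPolynomial (Fin 2) R) (g : GL (Fin 2) R) :
    evalBottomRow R P g = eval (g.val 1) P :=
  rfl

theorem evalBottomRow_linearSubst (h : GL (Fin 2) R) (P : MvPolynomial (Fin 2) R) :
    evalBottomRow R (linearSubst h.val P) = fun g ↦ evalBottomRow R P (g * h) :=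
  funext fun g ↦ eval_linearSubst (g.val 1) h.val P

theorem mem_borelInduced_iff {r : ℕ} {f : GL (Fin 2) R → R} :
    f ∈ borelInduced R r ↔
      ∀ (g g' : GL (Fin 2) R) (c : R), g'.val 1 = c • g.val 1 → f g' = c ^ r * f g := by
  constructor
  · intro hf g g' c hrow
    have hb : (g' * g⁻¹).val 1 = Pi.single 1 c := by
      calc (g' * g⁻¹).val 1 = Matrix.vecMul (c • g.val 1) g⁻¹.val := by rw [← hrow]; rfl
        _ = c • (g * g⁻¹).val 1 := Matrix.smul_vecMul _ _ _
        _ = Pi.single 1 c := by ext i; fin_cases i <;> simp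
    simpa [hb] using hf (g' * g⁻¹) (by simp [hb]) g
  · intro hf b hb g
    refine hf g (b * g) (b.val 1 1) ?_
    ext j
    simp [Matrix.mul_apply, hb]

theorem evalBottomRow_mem_borelInduced {P : MvPolynomial (Fin 2) R} {r : ℕ}
    (hP : P.IsHomogeneous r) : evalBottomRow R P ∈ borelInduced R r :=
  mem_borelInduced_iff.2 fun g g' c hrow ↦ by
    rw [evalBottomRow_apply, hrow, eval_smul_of_isHomogeneous hP, evalBottomRow_apply]

theorem exists_GL_bottomRow_eq {v : Fin 2 → R} (hv : IsCoprime (v 0) (v 1)) :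
    ∃ g : GL (Fin 2) R, g.val 1 = v := by
  obtain ⟨g, h0, h1⟩ := hv.exists_SL2_row 1
  exact ⟨g, funext (Fin.forall_fin_two.2 ⟨h0, h1⟩)⟩

end BottomRow

section Field

variable {K : Type*} [Field K]

theorem borelInduced_ext {r : ℕ} {f f' : GL (Fin 2) K → K} (hf : f ∈ borelInduced K r)
    (hf' : f' ∈ borelInduced K r) {g₀ : GL (Fin 2) K} {γ : K → GL (Fin 2) K}
    (hg₀ : g₀.val 1 = ![1, 0]) (hγ : ∀ t, (γ t).val 1 = ![t, 1])
    (hinf : f g₀ = f' g₀) (haff : ∀ t, f (γ t) = f' (γ t)) : f = f' := by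
  rw [mem_borelInduced_iff] at hf hf'
  funext g
  obtain hd | hd := eq_or_ne (g.val 1 1) 0
  · have hrow : g.val 1 = g.val 1 0 • g₀.val 1 := by
      ext j; fin_cases j <;> simp [hg₀, hd]
    rw [hf _ _ _ hrow, hf' _ _ _ hrow, hinf]
  · have hrow : g.val 1 = g.val 1 1 • (γ (g.val 1 0 / g.val 1 1)).val 1 := by
      ext j; fin_cases j <;> simp [hγ, mul_div_cancel₀, hd]
    rw [hf _ _ _ hrow, hf' _ _ _ hrow, haff]

end Field

section FiniteField

variable {K : Type*} [Field K] [Fintype K] {r : ℕ}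

theorem exists_evalBottomRow_eq (hr : Fintype.card K ≤ r) {f : GL (Fin 2) K → K}
    (hf : f ∈ borelInduced K r) :
    ∃ P : MvPolynomial (Fin 2) K, P.IsHomogeneous r ∧ evalBottomRow K P = f := by
  obtain ⟨g₀, hg₀⟩ := exists_GL_bottomRow_eq (v := ![(1 : K), 0]) isCoprime_one_left
  choose γ hγ using fun t : K ↦ exists_GL_bottomRow_eq (v := ![t, 1]) isCoprime_one_right
  obtain ⟨P, hP, haff, hinf⟩ := exists_isHomogeneous_eval_eq hr (f ∘ γ) (f g₀)
  refine ⟨P, hP, borelInduced_ext (evalBottomRow_mem_borelInduced hP) hf hg₀ hγ ?_ fun t ↦ ?_⟩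
  · rw [evalBottomRow_apply, hg₀, hinf]
  · rw [evalBottomRow_apply, hγ, haff, Function.comp_apply]

theorem evalBottomRow_eq_zero_iff {P : MvPolynomial (Fin 2) K} (hP : P.IsHomogeneous r) :
    evalBottomRow K P = 0 ↔ dicksonForm K ∣ P := by
  constructor
  · intro h
    have heval (v : Fin 2 → K) (hv : IsCoprime (v 0) (v 1)) : eval v P = 0 := by
      obtain ⟨g, rfl⟩ := exists_GL_bottomRow_eq hv
      exact congrFun h g
    exact dicksonForm_dvd_of_eval_eq_zero hP (heval _ isCoprime_one_left)
      fun t ↦ heval _ isCoprime_one_right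
  · rintro ⟨Q, rfl⟩
    funext g
    rw [evalBottomRow_apply, map_mul, eval_dicksonForm, zero_mul, Pi.zero_apply]

end FiniteField

theorem stmt0_general {K : Type*} [Field K] [Fintype K] {q r : ℕ} (hq : Fintype.card K = q)
    (hr : q ≤ r) :
    (∀ P ∈ homogeneousSubmodule (Fin 2) K r, evalBottomRow K P ∈ borelInduced K r) ∧
    (∀ (h : GL (Fin 2) K) (P : MvPolynomial (Fin 2) K),
      evalBottomRow K (linearSubst h.val P) = fun g ↦ evalBottomRow K P (g * h)) ∧
    (∀ f ∈ borelInduced K r, ∃ P ∈ homogeneousSubmodule (Fin 2) K r, evalBottomRow K P = f) ∧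
    (∀ P ∈ homogeneousSubmodule (Fin 2) K r,
      (evalBottomRow K P = 0 ↔ X 0 ^ q * X 1 - X 0 * X 1 ^ q ∣ P)) := by
  subst hq
  exact ⟨fun _ hP ↦ evalBottomRow_mem_borelInduced hP, evalBottomRow_linearSubst,
    fun _ hf ↦ exists_evalBottomRow_eq hr hf, fun _ hP ↦ evalBottomRow_eq_zero_iff hP⟩

/-- For r ≥ p+1, the map ψ : V_r → ind_{B(𝔽_p)}^{GL₂(𝔽_p)} d^r,
ψ_P(g) = P(c,d) (evaluation at the bottom row), is a GL₂(𝔽_p)-equivariant surjective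
𝔽_p-linear map with kernel exactly V_r*; consequently it induces an isomorphism
V_r/V_r* ≅ ind_{B(𝔽_p)}^{GL₂(𝔽_p)} d^r. -/
theorem stmt0 (p : ℕ) [Fact p.Prime] (r : ℕ) (hr : p + 1 ≤ r) :
    -- ψ takes values in the induced representation
    (∀ P ∈ Vpoly p r, psi p P ∈ IndB p r) ∧
    -- ψ is 𝔽_p-linear
    (∀ P Q, psi p (P + Q) = psi p P + psi p Q) ∧
    (∀ (c : ZMod p) P, psi p (c • P) = c • psi p P) ∧
    -- ψ is GL₂(𝔽_p)-equivariant (for the right-translation action on functions)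
    (∀ (h : GL (Fin 2) (ZMod p)) (P : MvPolynomial (Fin 2) (ZMod p)),
      psi p (polyAct p ((h : Matrix (Fin 2) (Fin 2) (ZMod p))) P) =
        fun g => psi p P (g * h)) ∧
    -- ψ restricted to V_r is surjective onto the induced representation
    (∀ f ∈ IndB p r, ∃ P ∈ Vpoly p r, psi p P = f) ∧
    -- the kernel of ψ on V_r is exactly V_r*
    (∀ P ∈ Vpoly p r, (psi p P = 0 ↔ P ∈ VpolyStar p r)) := by
  obtain ⟨hmem, hequiv, hsurj, hker⟩ := stmt0_general (ZMod.card p) (p.le_succ.trans hr)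
  exact ⟨hmem, map_add (evalBottomRow (ZMod p)), map_smul (evalBottomRow (ZMod p)), hequiv, hsurj,
    fun P hP ↦ (hker P hP).trans (by simp [VpolyStar, hP, Ideal.mem_span_singleton])⟩
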